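/- Let Ω be an open subset of ℝⁿ and let f, g, h be H-continuous pairs on Ω. Then (f ⊗ g) ⊗ h = f ⊗ (g ⊗ h), where each ⊗ denotes the unique H-continuous pair contained in the pointwise interval product of its two arguments. -/

import Mathlib

open Set

/-- Points of `ℝⁿ`. -/
abbrev Pt (n : ℕ) := EuclideanSpace ℝ (Fin n)

/-- Lower Baire operator `I(D,Ω,f)(x) = sup_{δ>0} inf { f y : y ∈ B_δ(x) ∩ D }`,
where `B_δ(x) = { y ∈ Ω : ‖y - x‖ < δ }`. -/
noncomputable def Ilow {n : ℕ} (D Om : Set (Pt n)) (f : Pt n → ℝ) (x : Pt n) : ℝ :=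
  sSup {a : ℝ | ∃ δ : ℝ, 0 < δ ∧
    a = sInf (f '' {y | y ∈ Om ∧ ‖y - x‖ < δ ∧ y ∈ D})}

/-- Upper Baire operator `S(D,Ω,f)(x) = inf_{δ>0} sup { f y : y ∈ B_δ(x) ∩ D }`. -/
noncomputable def Shigh {n : ℕ} (D Om : Set (Pt n)) (f : Pt n → ℝ) (x : Pt n) : ℝ :=
  sInf {a : ℝ | ∃ δ : ℝ, 0 < δ ∧
    a = sSup (f '' {y | y ∈ Om ∧ ‖y - x‖ < δ ∧ y ∈ D})}

/-- `f`, defined on `D ⊆ Ω`, is locally bounded relative to `Ω`. -/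
def LocBddOn {n : ℕ} (Om D : Set (Pt n)) (f : Pt n → ℝ) : Prop :=
  ∀ x ∈ Om, ∃ δ : ℝ, 0 < δ ∧ ∃ M : ℝ,
    ∀ y, y ∈ Om → ‖y - x‖ < δ → y ∈ D → |f y| < M

/-- `(u, v)` encodes an interval-valued function `x ↦ [u x, v x]` on `Om`. -/
def IntervalPair {n : ℕ} (Om : Set (Pt n)) (u v : Pt n → ℝ) : Prop :=
  LocBddOn Om Om u ∧ LocBddOn Om Om v ∧ ∀ x ∈ Om, u x ≤ v x

/-- The pair `(u, v)` is S-continuous on `Om`: `I(u) = u` and `S(v) = v`. -/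
def SCont {n : ℕ} (Om : Set (Pt n)) (u v : Pt n → ℝ) : Prop :=
  ∀ x ∈ Om, Ilow Om Om u x = u x ∧ Shigh Om Om v x = v x

/-- The pair `(u, v)` is Hausdorff continuous on `Om`. -/
def HCont {n : ℕ} (Om : Set (Pt n)) (u v : Pt n → ℝ) : Prop :=
  ∀ p q : Pt n → ℝ, LocBddOn Om Om p → LocBddOn Om Om q →
    (∀ x ∈ Om, u x ≤ p x ∧ p x ≤ q x ∧ q x ≤ v x) →
    ∀ x ∈ Om, Ilow Om Om p x = u x ∧ Shigh Om Om q x = v x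

/-- `(u, v)` is an H-continuous interval pair on `Om`. -/
def HContPair {n : ℕ} (Om : Set (Pt n)) (u v : Pt n → ℝ) : Prop :=
  IntervalPair Om u v ∧ HCont Om u v

/-- Lower endpoint of the pointwise interval product. -/
noncomputable def imin {n : ℕ} (u₁ v₁ u₂ v₂ : Pt n → ℝ) (x : Pt n) : ℝ :=
  min (min (u₁ x * u₂ x) (u₁ x * v₂ x)) (min (v₁ x * u₂ x) (v₁ x * v₂ x))

/-- Upper endpoint of the pointwise interval product. -/
noncomputable def imax {n : ℕ} (u₁ v₁ u₂ v₂ : Pt n → ℝ) (x : Pt n) : ℝ :=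
  max (max (u₁ x * u₂ x) (u₁ x * v₂ x)) (max (v₁ x * u₂ x) (v₁ x * v₂ x))

/-- `(pl, pu)` is the H-continuous pair contained pointwise in the interval sum of
`(u₁, v₁)` and `(u₂, v₂)`, i.e. `(pl, pu) = (u₁,v₁) ⊕ (u₂,v₂)`. -/
def IsOplus {n : ℕ} (Om : Set (Pt n)) (u₁ v₁ u₂ v₂ pl pu : Pt n → ℝ) : Prop :=
  HContPair Om pl pu ∧
    ∀ x ∈ Om, u₁ x + u₂ x ≤ pl x ∧ pl x ≤ pu x ∧ pu x ≤ v₁ x + v₂ x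

/-- `(ql, qu)` is the H-continuous pair contained pointwise in the interval product of
`(u₁, v₁)` and `(u₂, v₂)`, i.e. `(ql, qu) = (u₁,v₁) ⊗ (u₂,v₂)`. -/
def IsOtimes {n : ℕ} (Om : Set (Pt n)) (u₁ v₁ u₂ v₂ ql qu : Pt n → ℝ) : Prop :=
  HContPair Om ql qu ∧
    ∀ x ∈ Om, imin u₁ v₁ u₂ v₂ x ≤ ql x ∧ ql x ≤ qu x ∧ qu x ≤ imax u₁ v₁ u₂ v₂ x

/-!
H-continuity forces the upper endpoint `v` to come arbitrarily close to the lower endpoint `u` near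
every point, and the width `v - u` is upper semicontinuous, so `{v - u < ε}` is open and dense in
`Ω`, and finitely many such sets still have dense intersection. Hence every `x ∈ Ω` is the limit of
an ultrafilter along which each of the three factors shrinks to a real number; along it both
bracketings shrink to the product of these numbers. Two H-continuous pairs which shrink to the same
number along some filter converging to each `x ∈ Ω` must coincide.
-/

open Filter Topology

section BaireOperators

variable {n : ℕ} {Om D : Set (Pt n)} {f : Pt n → ℝ} {x : Pt n}

theorem Ilow_eq_iSup_sInf_ball (hD : D ⊆ Om) (f : Pt n → ℝ) (x : Pt n) :
    Ilow D Om f x = ⨆ δ : Ioi (0 : ℝ), sInf (f '' (Metric.ball x δ ∩ D)) := by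
  have hball (δ : ℝ) : {y | y ∈ Om ∧ ‖y - x‖ < δ ∧ y ∈ D} = Metric.ball x δ ∩ D := by
    ext y
    simpa only [Set.mem_ofPred_eq, mem_inter_iff, mem_ball_iff_norm] using
      and_iff_right_of_imp fun hy => hD hy.2
  simp only [Ilow, hball]
  congr 1
  ext a
  simp [eq_comm]

theorem Shigh_eq_neg_Ilow_neg (D Om : Set (Pt n)) (f : Pt n → ℝ) (x : Pt n) :
    Shigh D Om f x = -Ilow D Om (-f) x := by
  have hneg (s : Set (Pt n)) : sInf ((-f) '' s) = -sSup (f '' s) := by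
    rw [← Real.sInf_neg, ← image_neg_eq_neg, image_image]
    rfl
  simp only [Shigh, Ilow, hneg]
  rw [Real.sInf_def]
  congr 2
  ext a
  simp [neg_eq_iff_eq_neg]

-- The junk value `sInf s = 0` for `s` unbounded below makes large balls contribute `0` to the
-- supremum defining `Ilow`.
theorem Ilow_nonneg_of_not_bddBelow (hD : D ⊆ Om) {δ : ℝ}
    (h : ¬BddBelow (f '' (Metric.ball x δ ∩ D))) : 0 ≤ Ilow D Om f x := by
  have hδ : 0 < δ := by
    by_contra! hδ
    simp [Metric.ball_eq_empty.2 hδ] at h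
  rw [Ilow_eq_iSup_sInf_ball hD]
  exact Real.iSup_nonneg' ⟨⟨δ, hδ⟩, (Real.sInf_of_not_bddBelow h).ge⟩

theorem bddBelow_image_ball_of_Ilow_le (hD : D ⊆ Om) (h : ∀ y ∈ D, Ilow D Om f y ≤ f y)
    (x : Pt n) (δ : ℝ) : BddBelow (f '' (Metric.ball x δ ∩ D)) := by
  by_contra hb
  refine hb ⟨0, forall_mem_image.2 fun y hy => le_trans ?_ (h y hy.2)⟩
  have hball : Metric.ball x δ ∩ D ⊆ Metric.ball y (δ + dist x y) ∩ D :=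
    inter_subset_inter_left D (Metric.ball_subset_ball' le_rfl)
  exact Ilow_nonneg_of_not_bddBelow hD fun hb' => hb (hb'.mono (image_mono hball))

theorem Ilow_eq_liminf (hD : D ⊆ Om) (hx : x ∈ closure D)
    (hbdd : ∀ δ, BddBelow (f '' (Metric.ball x δ ∩ D)))
    (hcobdd : (𝓝[D] x).IsCoboundedUnder (· ≥ ·) f) : Ilow D Om f x = liminf f (𝓝[D] x) := by
  have hbasis := Metric.nhdsWithin_basis_ball (x := x) (s := D)
  have hle (δ : Ioi (0 : ℝ)) : sInf (f '' (Metric.ball x δ ∩ D)) ≤ liminf f (𝓝[D] x) :=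
    le_liminf_of_le hcobdd <| mem_of_superset (hbasis.mem_of_mem δ.2) fun y hy =>
      csInf_le (hbdd δ) (mem_image_of_mem f hy)
  rw [Ilow_eq_iSup_sInf_ball hD]
  refine le_antisymm (ciSup_le hle) (le_of_forall_lt_imp_le_of_dense fun a ha => ?_)
  have hbddUnder : (𝓝[D] x).IsBoundedUnder (· ≥ ·) f := by
    obtain ⟨m, hm⟩ := hbdd 1
    exact isBoundedUnder_of_eventually_ge (mem_of_superset (hbasis.mem_of_mem one_pos) fun y hy =>
      hm (mem_image_of_mem f hy))
  obtain ⟨δ, hδ, hlt⟩ := hbasis.eventually_iff.1 (eventually_lt_of_lt_liminf ha hbddUnder)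
  have hne : (f '' (Metric.ball x δ ∩ D)).Nonempty := by
    rw [mem_closure_iff_nhdsWithin_neBot] at hx
    exact (Filter.nonempty_of_mem (hbasis.mem_of_mem hδ)).image f
  calc a ≤ sInf (f '' (Metric.ball x δ ∩ D)) :=
        le_csInf hne (forall_mem_image.2 fun y hy => (hlt hy).le)
    _ ≤ _ := le_ciSup (f := fun δ : Ioi (0 : ℝ) => sInf (f '' (Metric.ball x δ ∩ D)))
        ⟨_, forall_mem_range.2 hle⟩ ⟨δ, hδ⟩

end BaireOperators

namespace LocBddOn

variable {n : ℕ} {Om D : Set (Pt n)} {f : Pt n → ℝ} {x : Pt n}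

theorem neg (h : LocBddOn Om D f) : LocBddOn Om D (-f) := by
  simpa only [LocBddOn, Pi.neg_apply, abs_neg] using h

theorem isBoundedUnder_abs (h : LocBddOn Om D f) (hD : D ⊆ Om) (hx : x ∈ Om) :
    (𝓝[D] x).IsBoundedUnder (· ≤ ·) fun y => |f y| := by
  obtain ⟨δ, hδ, M, hM⟩ := h x hx
  exact isBoundedUnder_of_eventually_le <|
    mem_of_superset (Metric.nhdsWithin_basis_ball.mem_of_mem hδ) fun y hy =>
      (hM y (hD hy.2) (mem_ball_iff_norm.1 hy.1) hy.2).le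

end LocBddOn

section SemicontinuityAndLimits

variable {X ι : Type*} [TopologicalSpace X]

theorem le_of_tendsto_of_lowerSemicontinuousWithinAt {β : Type*} [LinearOrder β]
    [DenselyOrdered β] [TopologicalSpace β] [ClosedIciTopology β] {f : X → β} {s : Set X} {x : X}
    {c : β} {F : Filter X} [F.NeBot] (hf : LowerSemicontinuousWithinAt f s x) (hF : F ≤ 𝓝[s] x)
    (hc : Tendsto f F (𝓝 c)) : f x ≤ c :=
  le_of_forall_lt_imp_le_of_dense fun a ha =>
    ge_of_tendsto hc (((hf a ha).filter_mono hF).mono fun _ hy => hy.le)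

theorem exists_tendsto_of_isBoundedUnder_abs {F : Ultrafilter ι} {f : ι → ℝ}
    (hf : (F : Filter ι).IsBoundedUnder (· ≤ ·) fun i => |f i|) : ∃ c, Tendsto f F (𝓝 c) := by
  obtain ⟨M, hM⟩ := hf
  obtain ⟨c, -, hc⟩ := (isCompact_Icc (a := -M) (b := M)).ultrafilter_le_nhds' (F.map f)
    ((eventually_map.1 hM).mono fun _ hi => abs_le.1 hi)
  exact ⟨c, hc⟩

theorem mapClusterPt_zero_of_upperSemicontinuous [Finite ι] {w : ι → X → ℝ}
    (hnonneg : ∀ i x, 0 ≤ w i x) (husc : ∀ i, UpperSemicontinuous (w i))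
    (hdense : ∀ i, ∀ ε > 0, Dense {x | w i x < ε}) (x : X) :
    MapClusterPt 0 (𝓝 x) fun y i => w i y := by
  have := Fintype.ofFinite ι
  refine Metric.nhds_basis_ball.mapClusterPt_iff_frequently.2 fun ε hε => ?_
  have hinter : Dense (⋂₀ range fun i => {y | w i y < ε}) :=
    (finite_range _).dense_sInter (forall_mem_range.2 fun i => (husc i).isOpen_preimage ε)
      (forall_mem_range.2 fun i => hdense i ε hε)
  refine (mem_closure_iff_frequently.1 (hinter x)).mono fun y hy => ?_
  simp only [sInter_range, mem_iInter, Set.mem_ofPred_eq] at hy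
  simpa only [mem_ball_zero_iff, pi_norm_lt_iff hε, Real.norm_of_nonneg (hnonneg _ y)] using hy

end SemicontinuityAndLimits

namespace HContPair

variable {n : ℕ} {Om : Set (Pt n)} {u v u' v' : Pt n → ℝ} {x : Pt n}

theorem neg (h : HContPair Om u v) : HContPair Om (-v) (-u) := by
  obtain ⟨⟨hu, hv, huv⟩, hcont⟩ := h
  refine ⟨⟨hv.neg, hu.neg, fun x hx => neg_le_neg (huv x hx)⟩, fun p q hp hq hpq x hx => ?_⟩
  have hneg := hcont (-q) (-p) hq.neg hp.neg
    (fun y hy => ⟨le_neg_of_le_neg (hpq y hy).2.2, neg_le_neg (hpq y hy).2.1,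
      neg_le_of_neg_le (hpq y hy).1⟩) x hx
  rw [Shigh_eq_neg_Ilow_neg, neg_neg] at hneg
  rw [Shigh_eq_neg_Ilow_neg]
  exact ⟨neg_eq_iff_eq_neg.1 hneg.2, congrArg Neg.neg hneg.1⟩

theorem Ilow_lower (h : HContPair Om u v) (hx : x ∈ Om) : Ilow Om Om u x = u x :=
  (h.2 u v h.1.1 h.1.2.1 (fun y hy => ⟨le_rfl, h.1.2.2 y hy, le_rfl⟩) x hx).1

theorem Ilow_upper (h : HContPair Om u v) (hx : x ∈ Om) : Ilow Om Om v x = u x :=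
  (h.2 v v h.1.2.1 h.1.2.1 (fun y hy => ⟨h.1.2.2 y hy, le_rfl, le_rfl⟩) x hx).1

theorem isBoundedUnder_abs_lower (h : HContPair Om u v) (hx : x ∈ Om) :
    (𝓝[Om] x).IsBoundedUnder (· ≤ ·) fun y => |u y| :=
  h.1.1.isBoundedUnder_abs subset_rfl hx

theorem isBoundedUnder_abs_upper (h : HContPair Om u v) (hx : x ∈ Om) :
    (𝓝[Om] x).IsBoundedUnder (· ≤ ·) fun y => |v y| :=
  h.1.2.1.isBoundedUnder_abs subset_rfl hx

theorem isCoboundedUnder_ge_upper (h : HContPair Om u v) (hx : x ∈ Om) :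
    (𝓝[Om] x).IsCoboundedUnder (· ≥ ·) v :=
  have := mem_closure_iff_nhdsWithin_neBot.1 (subset_closure hx)
  (isBoundedUnder_le_abs.1 (h.isBoundedUnder_abs_upper hx)).1.isCoboundedUnder_ge

theorem liminf_lower (h : HContPair Om u v) (hx : x ∈ Om) : liminf u (𝓝[Om] x) = u x := by
  have := mem_closure_iff_nhdsWithin_neBot.1 (subset_closure hx)
  rw [← Ilow_eq_liminf subset_rfl (subset_closure hx), h.Ilow_lower hx]
  · exact bddBelow_image_ball_of_Ilow_le subset_rfl (fun y hy => (h.Ilow_lower hy).le) x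
  · exact (isBoundedUnder_le_abs.1 (h.isBoundedUnder_abs_lower hx)).1.isCoboundedUnder_ge

theorem liminf_upper (h : HContPair Om u v) (hx : x ∈ Om) : liminf v (𝓝[Om] x) = u x := by
  rw [← Ilow_eq_liminf subset_rfl (subset_closure hx) _ (h.isCoboundedUnder_ge_upper hx),
    h.Ilow_upper hx]
  exact bddBelow_image_ball_of_Ilow_le subset_rfl
    (fun y hy => (h.Ilow_upper hy).trans_le (h.1.2.2 y hy)) x

theorem lowerSemicontinuousOn_lower (h : HContPair Om u v) : LowerSemicontinuousOn u Om :=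
  fun _ hx _ ha => eventually_lt_of_lt_liminf (ha.trans_eq (h.liminf_lower hx).symm)
    (isBoundedUnder_le_abs.1 (h.isBoundedUnder_abs_lower hx)).2

theorem upperSemicontinuousOn_width (h : HContPair Om u v) :
    UpperSemicontinuousOn (v - u) Om := by
  have hv : UpperSemicontinuousOn v Om := by
    simpa only [neg_neg] using h.neg.lowerSemicontinuousOn_lower.neg
  rw [sub_eq_add_neg]
  exact hv.add h.lowerSemicontinuousOn_lower.neg

theorem frequently_width_lt (h : HContPair Om u v) (hx : x ∈ Om) {ε : ℝ} (hε : 0 < ε) :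
    ∃ᶠ y in 𝓝[Om] x, v y - u y < ε := by
  have hv : ∃ᶠ y in 𝓝[Om] x, v y < u x + ε / 2 :=
    frequently_lt_of_liminf_lt (h.isCoboundedUnder_ge_upper hx)
      (by rw [h.liminf_upper hx]; exact lt_add_of_pos_right _ (half_pos hε))
  have hu : ∀ᶠ y in 𝓝[Om] x, u x - ε / 2 < u y :=
    h.lowerSemicontinuousOn_lower x hx _ (sub_lt_self _ (half_pos hε))
  exact (hv.and_eventually hu).mono fun y hy => by linarith [hy.1, hy.2]

theorem mapClusterPt_width {ι : Type*} [Finite ι] {u v : ι → Pt n → ℝ}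
    (h : ∀ i, HContPair Om (u i) (v i)) (hx : x ∈ Om) :
    MapClusterPt 0 (𝓝[Om] x) fun y i => v i y - u i y := by
  rw [nhdsWithin_eq_map_subtype_coe hx, ← mapClusterPt_comp]
  refine mapClusterPt_zero_of_upperSemicontinuous (w := fun i => Om.domRestrict (v i - u i))
    (fun i y => sub_nonneg.2 ((h i).1.2.2 y y.2))
    (fun i => upperSemicontinuousOn_iff_restrict.2 (h i).upperSemicontinuousOn_width)
    (fun i ε hε y => mem_closure_iff_frequently.2 ?_) ⟨x, hx⟩
  have hy := (h i).frequently_width_lt y.2 hε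
  rwa [← map_nhds_subtype_val, frequently_map] at hy

theorem lower_le_lower (h : HContPair Om u v) (h' : HContPair Om u' v')
    (hle : ∀ y ∈ Om, u y ≤ v' y) (hx : x ∈ Om) : u x ≤ u' x :=
  calc u x = liminf u (𝓝[Om] x) := (h.liminf_lower hx).symm
    _ ≤ liminf v' (𝓝[Om] x) :=
      liminf_le_liminf (eventually_mem_nhdsWithin.mono hle)
        (isBoundedUnder_le_abs.1 (h.isBoundedUnder_abs_lower hx)).2
        (h'.isCoboundedUnder_ge_upper hx)
    _ = u' x := h'.liminf_upper hx

theorem upper_le_upper (h : HContPair Om u v) (h' : HContPair Om u' v')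
    (hle : ∀ y ∈ Om, u y ≤ v' y) (hx : x ∈ Om) : v x ≤ v' x :=
  neg_le_neg_iff.1 (h'.neg.lower_le_lower h.neg (fun y hy => neg_le_neg (hle y hy)) hx)

end HContPair

/-- The interval-valued function `y ↦ [u y, v y]` shrinks to the single number `c` along the
filter `F`: both endpoints tend to `c`. Such limits are used to compare interval products, which
are only bracketed, and not given by a formula, at points where the factors are proper intervals. -/
def IntervalTendsto {α : Type*} (F : Filter α) (u v : α → ℝ) (c : ℝ) : Prop :=
  Tendsto u F (𝓝 c) ∧ Tendsto v F (𝓝 c)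

section Limits

variable {n : ℕ} {Om : Set (Pt n)} {x : Pt n}

theorem IsOtimes.intervalTendsto {u₁ v₁ u₂ v₂ ql qu : Pt n → ℝ}
    (h : IsOtimes Om u₁ v₁ u₂ v₂ ql qu) {F : Filter (Pt n)} (hF : F ≤ 𝓟 Om) {c₁ c₂ : ℝ}
    (h₁ : IntervalTendsto F u₁ v₁ c₁) (h₂ : IntervalTendsto F u₂ v₂ c₂) :
    IntervalTendsto F ql qu (c₁ * c₂) := by
  obtain ⟨hu₁, hv₁⟩ := h₁
  obtain ⟨hu₂, hv₂⟩ := h₂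
  have hmin : Tendsto (imin u₁ v₁ u₂ v₂) F (𝓝 (c₁ * c₂)) := by
    unfold imin
    simpa only [min_self] using
      ((hu₁.mul hu₂).min (hu₁.mul hv₂)).min ((hv₁.mul hu₂).min (hv₁.mul hv₂))
  have hmax : Tendsto (imax u₁ v₁ u₂ v₂) F (𝓝 (c₁ * c₂)) := by
    unfold imax
    simpa only [max_self] using
      ((hu₁.mul hu₂).max (hu₁.mul hv₂)).max ((hv₁.mul hu₂).max (hv₁.mul hv₂))
  have hmem : ∀ᶠ y in F, y ∈ Om := le_principal_iff.1 hF
  exact ⟨tendsto_of_tendsto_of_tendsto_of_le_of_le' hmin hmax (hmem.mono fun y hy => (h.2 y hy).1)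
      (hmem.mono fun y hy => (h.2 y hy).2.1.trans (h.2 y hy).2.2),
    tendsto_of_tendsto_of_tendsto_of_le_of_le' hmin hmax
      (hmem.mono fun y hy => (h.2 y hy).1.trans (h.2 y hy).2.1)
      (hmem.mono fun y hy => (h.2 y hy).2.2)⟩

theorem HContPair.mem_Icc_of_intervalTendsto {u v : Pt n → ℝ} (h : HContPair Om u v) (hx : x ∈ Om)
    {F : Filter (Pt n)} [F.NeBot] (hF : F ≤ 𝓝[Om] x) {c : ℝ} (hc : IntervalTendsto F u v c) :
    c ∈ Icc (u x) (v x) :=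
  ⟨le_of_tendsto_of_lowerSemicontinuousWithinAt (h.lowerSemicontinuousOn_lower x hx) hF hc.1,
    neg_le_neg_iff.1 <| le_of_tendsto_of_lowerSemicontinuousWithinAt (f := -v)
      (h.neg.lowerSemicontinuousOn_lower x hx) hF hc.2.neg⟩

theorem HContPair.exists_ultrafilter_intervalTendsto {ι : Type*} [Finite ι] {u v : ι → Pt n → ℝ}
    (h : ∀ i, HContPair Om (u i) (v i)) (hx : x ∈ Om) :
    ∃ F : Ultrafilter (Pt n), ↑F ≤ 𝓝[Om] x ∧ ∀ i, ∃ c, IntervalTendsto F (u i) (v i) c := by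
  obtain ⟨F, hF, hwidth⟩ := mapClusterPt_iff_ultrafilter.1 (mapClusterPt_width h hx)
  refine ⟨F, hF, fun i => ?_⟩
  obtain ⟨c, hc⟩ := exists_tendsto_of_isBoundedUnder_abs
    (((h i).isBoundedUnder_abs_lower hx).mono hF)
  refine ⟨c, hc, ?_⟩
  simpa using hc.add (tendsto_pi_nhds.1 hwidth i)

theorem HContPair.eq_of_forall_exists_intervalTendsto {u v u' v' : Pt n → ℝ}
    (h : HContPair Om u v) (h' : HContPair Om u' v')
    (hlim : ∀ x ∈ Om, ∃ F : Filter (Pt n), F.NeBot ∧ F ≤ 𝓝[Om] x ∧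
      ∃ c, IntervalTendsto F u v c ∧ IntervalTendsto F u' v' c) :
    ∀ x ∈ Om, u x = u' x ∧ v x = v' x := by
  have hoverlap : ∀ y ∈ Om, u y ≤ v' y ∧ u' y ≤ v y := fun y hy => by
    obtain ⟨F, _, hF, c, hc, hc'⟩ := hlim y hy
    have hmem := h.mem_Icc_of_intervalTendsto hy hF hc
    have hmem' := h'.mem_Icc_of_intervalTendsto hy hF hc'
    exact ⟨hmem.1.trans hmem'.2, hmem'.1.trans hmem.2⟩
  have hle := fun y hy => (hoverlap y hy).1
  have hle' := fun y hy => (hoverlap y hy).2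
  exact fun x hx => ⟨(h.lower_le_lower h' hle hx).antisymm (h'.lower_le_lower h hle' hx),
    (h.upper_le_upper h' hle hx).antisymm (h'.upper_le_upper h hle' hx)⟩

end Limits

theorem stmt13_general {n : ℕ} (Om : Set (Pt n))
    (u₁ v₁ u₂ v₂ u₃ v₃ : Pt n → ℝ)
    (h₁ : HContPair Om u₁ v₁) (h₂ : HContPair Om u₂ v₂) (h₃ : HContPair Om u₃ v₃)
    (pl pu ql qu al au bl bu : Pt n → ℝ)
    (hfg : IsOtimes Om u₁ v₁ u₂ v₂ pl pu)
    (hfg_h : IsOtimes Om pl pu u₃ v₃ al au)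
    (hgh : IsOtimes Om u₂ v₂ u₃ v₃ ql qu)
    (hf_gh : IsOtimes Om u₁ v₁ ql qu bl bu) :
    ∀ x ∈ Om, al x = bl x ∧ au x = bu x := by
  refine hfg_h.1.eq_of_forall_exists_intervalTendsto hf_gh.1 fun x hx => ?_
  have hfactors : ∀ i, HContPair Om (![u₁, u₂, u₃] i) (![v₁, v₂, v₃] i) :=
    Fin.forall_fin_succ.2 ⟨h₁, Fin.forall_fin_two.2 ⟨h₂, h₃⟩⟩
  obtain ⟨F, hF, hlim⟩ := HContPair.exists_ultrafilter_intervalTendsto hfactors hx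
  obtain ⟨c₁, hc₁⟩ := hlim 0
  obtain ⟨c₂, hc₂⟩ := hlim 1
  obtain ⟨c₃, hc₃⟩ := hlim 2
  have hFOm : ↑F ≤ 𝓟 Om := hF.trans inf_le_right
  have hleft : IntervalTendsto F al au (c₁ * c₂ * c₃) :=
    hfg_h.intervalTendsto hFOm (hfg.intervalTendsto hFOm hc₁ hc₂) hc₃
  have hright : IntervalTendsto F bl bu (c₁ * (c₂ * c₃)) :=
    hf_gh.intervalTendsto hFOm hc₁ (hgh.intervalTendsto hFOm hc₂ hc₃)
  exact ⟨F, inferInstance, hF, c₁ * c₂ * c₃, hleft, by rwa [mul_assoc]⟩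

theorem stmt13 {n : ℕ} (Om : Set (Pt n)) (hOm : IsOpen Om)
    (u₁ v₁ u₂ v₂ u₃ v₃ : Pt n → ℝ)
    (h₁ : HContPair Om u₁ v₁) (h₂ : HContPair Om u₂ v₂) (h₃ : HContPair Om u₃ v₃)
    (pl pu ql qu al au bl bu : Pt n → ℝ)
    (hfg : IsOtimes Om u₁ v₁ u₂ v₂ pl pu)
    (hfg_h : IsOtimes Om pl pu u₃ v₃ al au)
    (hgh : IsOtimes Om u₂ v₂ u₃ v₃ ql qu)
    (hf_gh : IsOtimes Om u₁ v₁ ql qu bl bu) :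
    ∀ x ∈ Om, al x = bl x ∧ au x = bu x :=
  stmt13_general Om u₁ v₁ u₂ v₂ u₃ v₃ h₁ h₂ h₃ pl pu ql qu al au bl bu hfg hfg_h hgh hf_gh
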